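/- arXiv:2206.04913 — 3 statements merged into one kernel-verified Lean document; each statement's English description precedes it below -/
import Mathlib

section
/- Let S = {S_1, …, S_i} be a self semi-induced matching in a simple hypergraph H, let k ≥ 1, and let u_1, …, u_k ∈ {1, …, i} be indices (not necessarily distinct). If E_1, …, E_k are edges of H such that the monomial m(E_1)⋯m(E_k) divides m(S_{u_1})⋯m(S_{u_k}) in R, then the multiset {E_1, …, E_k} is equal to the multiset {S_{u_1}, …, S_{u_k}}. -/
open MvPolynomial

/-!
By divisibility, every vertex is covered by `E_1, …, E_k` at most as often as by
`S_{u_1}, …, S_{u_k}`. Hence each `E_j` lies in the union of the family `S`, so it is a member of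
`S`. A vertex that lies in `S_r` and in no other member then counts the occurrences of `S_r` on
both sides, so `S_r` occurs among the `E_j` at most as often as among the `S_{u_j}`.
-/

section Monomials

variable {σ R : Type*} [CommSemiring R]

theorem prod_map_X_eq_monomial_toFinsupp [DecidableEq σ] (M : Multiset σ) :
    (M.map X).prod = monomial (Multiset.toFinsupp M) (1 : R) := by
  induction M using Multiset.induction with
  | empty => simp
  | cons v M ih =>
    rw [Multiset.map_cons, Multiset.prod_cons, ih, ← Multiset.singleton_add, map_add,
      Multiset.toFinsupp_singleton, X, monomial_mul, one_mul]

theorem prod_map_X_dvd_prod_map_X_iff [Nontrivial R] {M N : Multiset σ} :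
    (M.map (X : σ → MvPolynomial σ R)).prod ∣ (N.map X).prod ↔ M ≤ N := by
  classical
  simp only [prod_map_X_eq_monomial_toFinsupp, monomial_dvd_monomial, one_ne_zero, false_or,
    dvd_refl, and_true]
  exact Finsupp.orderIsoMultiset.symm.le_iff_le

theorem prod_map_prod_X_eq_prod_map_bind_X {α : Type*} (A : Multiset α) (S : α → Finset σ) :
    (A.map fun a => ∏ v ∈ S a, (X v : MvPolynomial σ R)).prod =
      ((A.bind fun a => (S a).val).map X).prod := by
  rw [Multiset.map_bind, Multiset.prod_bind]
  rfl

end Monomials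

section Hypergraphs

variable {V ι : Type*} {H : Set (Finset V)} {S : ι → Finset V}

theorem count_bind_val_of_private_vertex [DecidableEq V] [DecidableEq ι] {v : V} {r : ι}
    (hv : ∀ t, v ∈ S t ↔ t = r) (s : Multiset ι) :
    (s.bind fun t => (S t).val).count v = s.count r := by
  induction s using Multiset.induction with
  | empty => simp
  | cons t s ih =>
    simp [Multiset.count_cons, Multiset.count_eq_of_nodup (S t).nodup, ih, hv, add_comm,
      eq_comm (a := r)]

/-- The family `S` is a self semi-induced matching in the hypergraph with edge set `H`.
The second field says both that every `S r` is an edge and that there is no other edge inside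
the union; that the `S r` are distinct is a consequence of the first. -/
structure IsSelfSemiInducedMatching (H : Set (Finset V)) (S : ι → Finset V) : Prop where
  not_subset_iUnion_ne : ∀ r, ¬ (S r : Set V) ⊆ ⋃ t ≠ r, S t
  mem_iff_mem_range : ∀ e : Finset V, (e : Set V) ⊆ ⋃ r, S r → (e ∈ H ↔ e ∈ Set.range S)

namespace IsSelfSemiInducedMatching

theorem of_finset_sup [Fintype ι] [DecidableEq ι] [DecidableEq V]
    (hmem : ∀ r, S r ∈ H) (hself : ∀ r, ¬ S r ⊆ (Finset.univ.erase r).sup S)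
    (hsemi : ∀ e ∈ H, e ⊆ Finset.univ.sup S → ∃ r, e = S r) :
    IsSelfSemiInducedMatching H S where
  not_subset_iUnion_ne r h := hself r fun v hv => by
    simpa using h hv
  mem_iff_mem_range e he := by
    refine ⟨fun heH => ?_, fun ⟨r, hr⟩ => hr ▸ hmem r⟩
    obtain ⟨r, rfl⟩ := hsemi e heH fun v hv => by simpa using he hv
    exact Set.mem_range_self r

theorem exists_private_vertex (hS : IsSelfSemiInducedMatching H S) (r : ι) :
    ∃ v, ∀ t, v ∈ S t ↔ t = r := by
  obtain ⟨v, hvr, hv⟩ := Set.not_subset.1 (hS.not_subset_iUnion_ne r)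
  refine ⟨v, fun t => ⟨fun hvt => ?_, fun h => h ▸ hvr⟩⟩
  by_contra hne
  exact hv (Set.mem_iUnion₂.2 ⟨t, hne, hvt⟩)

theorem le_of_bind_val_le (hS : IsSelfSemiInducedMatching H S)
    {s t : Multiset ι} (hst : (s.bind fun r => (S r).val) ≤ t.bind fun r => (S r).val) :
    s ≤ t := by
  classical
  refine Multiset.le_iff_count.2 fun r => ?_
  obtain ⟨v, hv⟩ := hS.exists_private_vertex r
  simpa only [count_bind_val_of_private_vertex hv] using Multiset.count_le_of_le v hst

theorem le_map_of_bind_val_le (hS : IsSelfSemiInducedMatching H S)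
    {E : Multiset (Finset V)} (hE : ∀ e ∈ E, e ∈ H) {s : Multiset ι}
    (hle : E.bind Finset.val ≤ s.bind fun r => (S r).val) : E ≤ s.map S := by
  have hrange : ∀ e ∈ E, e ∈ Set.range S := fun e he => by
    refine (hS.mem_iff_mem_range e fun v hv => ?_).1 (hE e he)
    have hvs := Multiset.mem_of_le hle (Multiset.mem_bind.2 ⟨e, he, hv⟩)
    obtain ⟨r, -, hvr⟩ := Multiset.mem_bind.1 hvs
    exact Set.mem_iUnion.2 ⟨r, hvr⟩
  have : CanLift (Finset V) ι S (· ∈ Set.range S) := ⟨fun _ he => he⟩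
  lift E to Multiset ι using hrange with t
  rw [Multiset.bind_map] at hle
  exact Multiset.map_le_map (hS.le_of_bind_val_le hle)

end IsSelfSemiInducedMatching

theorem stmt_0_general {R : Type*} [CommSemiring R] [Nontrivial R]
    (hS : IsSelfSemiInducedMatching H S)
    {E : Multiset (Finset V)} (hE : ∀ e ∈ E, e ∈ H) {s : Multiset ι}
    (hdvd : (E.map fun e => ∏ v ∈ e, (X v : MvPolynomial V R)).prod ∣
      (s.map fun r => ∏ v ∈ S r, (X v : MvPolynomial V R)).prod) :
    E ≤ s.map S := by
  rw [prod_map_prod_X_eq_prod_map_bind_X, prod_map_prod_X_eq_prod_map_bind_X,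
    prod_map_X_dvd_prod_map_X_iff] at hdvd
  exact hS.le_map_of_bind_val_le hE hdvd

end Hypergraphs

/-- If `S = {S_1, …, S_i}` is a self semi-induced matching in a simple hypergraph `H`,
`k ≥ 1`, `u_1, …, u_k` are (not necessarily distinct) indices and `E_1, …, E_k` are
edges of `H` whose monomial product divides `m(S_{u_1})⋯m(S_{u_k})`, then the
multiset `{E_1, …, E_k}` equals the multiset `{S_{u_1}, …, S_{u_k}}`. -/
theorem stmt_0 {V K : Type*} [Fintype V] [DecidableEq V] [Field K]
    (H : Finset (Finset V))
    (hedge : ∀ e ∈ H, 2 ≤ e.card)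
    (hsimple : ∀ e ∈ H, ∀ e' ∈ H, e ⊆ e' → e = e')
    {i : ℕ} (S : Fin i → Finset V)
    (hSinj : Function.Injective S)
    (hSH : ∀ r, S r ∈ H)
    (hself : ∀ r : Fin i, ¬ S r ⊆ (Finset.univ.erase r).sup S)
    (hsemi : ∀ e ∈ H, e ⊆ Finset.univ.sup S → ∃ r, e = S r)
    {k : ℕ} (hk : 1 ≤ k) (u : Fin k → Fin i)
    (E : Fin k → Finset V) (hE : ∀ j, E j ∈ H)
    (hdvd : (∏ j, ∏ v ∈ E j, (X v : MvPolynomial V K)) ∣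
        ∏ j, ∏ v ∈ S (u j), (X v : MvPolynomial V K)) :
    Multiset.map E Finset.univ.val = Multiset.map (fun j => S (u j)) Finset.univ.val := by
  have hle := stmt_0_general (R := K) (.of_finset_sup (H := H) hSH hself hsemi)
    (E := Finset.univ.val.map E) (s := Finset.univ.val.map u) (by simpa using hE)
    (by rw [Multiset.map_map, Multiset.map_map]; exact hdvd)
  simpa only [Multiset.map_map, Function.comp_def] using Multiset.eq_of_le_of_card_le hle (by simp)
end

section
/- Let S = {S_1, …, S_i} be a self semi-induced matching in a simple hypergraph H. Then for every k ≥ 1 and all indices u_1, …, u_k ∈ {1, …, i} (not necessarily distinct), the monomial m(S_{u_1})⋯m(S_{u_k}) lies in I(H)^k but does not lie in 𝔪·I(H)^k, where 𝔪 = ⟨x_v : v ∈ V⟩ is the ideal generated by all the variables; that is, m(S_{u_1})⋯m(S_{u_k}) is a minimal monomial generator of I(H)^k. -/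
open MvPolynomial

/-!
A monomial lies in a monomial ideal exactly when it is divisible by one of the generators, so a
failure of minimality would give edges `E₁, …, Eₖ` of `H` and a vertex `w` such that
`x_w * m(E₁) ⋯ m(Eₖ)` divides `m(S_{u₁}) ⋯ m(S_{uₖ})`. Every `Eⱼ` lies in the union of the
matching, hence is one of its members. Comparing exponents at a vertex that belongs to `S_q` only,
each `S_q` occurs among the `Eⱼ` at most as often as among the `S_{uⱼ}`; both lists have length `k`,
so they agree up to order and there is no room left for `x_w`.
-/

section IdealPowers

variable {α A : Type*} [CommSemiring A]

theorem span_image_pow (f : α → A) (s : Set α) (k : ℕ) :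
    Ideal.span (f '' s) ^ k =
      Ideal.span ((fun T : Multiset α => (T.map f).prod) ''
        {T | (∀ a ∈ T, a ∈ s) ∧ T.card = k}) := by
  induction k with
  | zero =>
    have only_zero : {T : Multiset α | (∀ a ∈ T, a ∈ s) ∧ T.card = 0} = {0} := by
      ext T
      simp +contextual
    rw [only_zero]
    simp
  | succ k ih =>
    rw [pow_succ', ih, Ideal.span_mul_span']
    congr 1
    ext x
    constructor
    · rintro ⟨_, ⟨a, ha, rfl⟩, _, ⟨T, ⟨hT, rfl⟩, rfl⟩, rfl⟩
      exact ⟨a ::ₘ T, by simpa [ha] using hT, by simp⟩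
    · rintro ⟨T, ⟨hT, hcard⟩, rfl⟩
      obtain ⟨a, T, rfl, hT'⟩ := Multiset.card_eq_succ_iff.1 hcard
      rw [Multiset.forall_mem_cons] at hT
      exact ⟨f a, ⟨a, hT.1, rfl⟩, (T.map f).prod, ⟨T, ⟨hT.2, hT'⟩, rfl⟩, by simp⟩

end IdealPowers

section Monomials

variable {V R : Type*} [CommSemiring R]

theorem prod_map_X_eq_monomial [DecidableEq V] (M : Multiset V) :
    (M.map (X : V → MvPolynomial V R)).prod = monomial (Multiset.toFinsupp M) 1 := by
  induction M using Multiset.induction_on with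
  | empty => simp
  | cons v M ih =>
    rw [Multiset.map_cons, Multiset.prod_cons, ih, X, monomial_mul, ← Multiset.singleton_add,
      Multiset.toFinsupp_add, Multiset.toFinsupp_singleton, one_mul]

theorem prod_map_X_mem_span_iff [Nontrivial R] {M : Multiset V} {N : Set (Multiset V)} :
    (M.map (X : V → MvPolynomial V R)).prod ∈
      Ideal.span ((fun M' : Multiset V => (M'.map X).prod) '' N) ↔ ∃ M' ∈ N, M' ≤ M := by
  classical
  have image_eq : (fun M' : Multiset V => (M'.map (X : V → MvPolynomial V R)).prod) '' N =
      (fun d => monomial d 1) '' (Multiset.toFinsupp '' N) := by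
    simp only [Set.image_image, prod_map_X_eq_monomial]
  rw [image_eq, prod_map_X_eq_monomial, mem_ideal_span_monomial_image]
  simp [support_monomial, Finsupp.le_def, Multiset.le_iff_count]

end Monomials

section EdgeIdeal

variable {V : Type*} (R : Type*) [CommSemiring R] (H : Set (Finset V))

/-- The edge ideal `I(H)` of a family `H` of finite sets of vertices. -/
noncomputable def edgeIdeal : Ideal (MvPolynomial V R) :=
  Ideal.span ((fun e : Finset V => ∏ v ∈ e, X v) '' H)

theorem prod_map_prod_X_eq_prod_bind (T : Multiset (Finset V)) :
    (T.map fun e => ∏ v ∈ e, (X v : MvPolynomial V R)).prod =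
      ((T.bind Finset.val).map X).prod := by
  rw [Multiset.map_bind, Multiset.prod_bind]
  rfl

variable {R H}

theorem prod_map_X_mem_idealOfVars_mul_edgeIdeal_pow_iff [Nontrivial R] {M : Multiset V} {k : ℕ} :
    (M.map X).prod ∈ idealOfVars V R * edgeIdeal R H ^ k ↔
      ∃ w, ∃ T : Multiset (Finset V),
        (∀ e ∈ T, e ∈ H) ∧ T.card = k ∧ w ::ₘ T.bind Finset.val ≤ M := by
  have generators_eq : idealOfVars V R * edgeIdeal R H ^ k =
      Ideal.span ((fun M' : Multiset V => (M'.map X).prod) ''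
        {M' | ∃ w, ∃ T : Multiset (Finset V),
          (∀ e ∈ T, e ∈ H) ∧ T.card = k ∧ w ::ₘ T.bind Finset.val = M'}) := by
    rw [edgeIdeal, span_image_pow, Ideal.span_mul_span']
    congr 1
    ext x
    simp [Set.mem_mul, prod_map_prod_X_eq_prod_bind, and_assoc]
  rw [generators_eq, prod_map_X_mem_span_iff]
  simp [and_assoc]

end EdgeIdeal

/-- A self semi-induced matching of the hypergraph with edge set `H`, indexed by `ι`. That `S r` is
not covered by the other members is phrased as the existence of a vertex of `S r` outside them; this
makes `S` injective. -/
structure IsSelfSemiInducedMatching_s1 {V ι : Type*} (H : Set (Finset V)) (S : ι → Finset V) :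
    Prop where
  mem_edges : ∀ r, S r ∈ H
  exists_private : ∀ r, ∃ v ∈ S r, ∀ s, v ∈ S s → s = r
  mem_range : ∀ e ∈ H, (∀ v ∈ e, ∃ r, v ∈ S r) → e ∈ Set.range S

section Matching

variable {V ι : Type*} {H : Set (Finset V)} {S : ι → Finset V}

theorem count_bind_val_eq_count [DecidableEq V] [DecidableEq ι] {v : V} {q : ι}
    (hv : ∀ r, v ∈ S r ↔ r = q) (U : Multiset ι) :
    ((U.map S).bind Finset.val).count v = U.count q := by
  induction U using Multiset.induction_on with
  | empty => simp
  | cons r U ih =>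
    simp [ih, Multiset.count_cons, Multiset.count_eq_of_nodup (S r).nodup, hv, eq_comm, add_comm]

theorem le_of_bind_val_le (hS : ∀ r, ∃ v ∈ S r, ∀ s, v ∈ S s → s = r) {T U : Multiset ι}
    (hle : (T.map S).bind Finset.val ≤ (U.map S).bind Finset.val) : T ≤ U := by
  classical
  refine Multiset.le_iff_count.2 fun q => ?_
  obtain ⟨v, hvq, hv⟩ := hS q
  have mem_iff r : v ∈ S r ↔ r = q := ⟨hv r, fun h => h ▸ hvq⟩
  simpa only [count_bind_val_eq_count mem_iff] using Multiset.count_le_of_le v hle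

namespace IsSelfSemiInducedMatching_s1

theorem exists_map_eq (hS : IsSelfSemiInducedMatching_s1 H S) {T : Multiset (Finset V)}
    (hT : ∀ e ∈ T, e ∈ H) {U : Multiset ι} (hle : T.bind Finset.val ≤ (U.map S).bind Finset.val) :
    ∃ T' : Multiset ι, T'.map S = T := by
  have mem_range : ∀ e ∈ T, e ∈ Set.range S := fun e he => hS.mem_range e (hT e he) fun v hv => by
    have hvU := Multiset.mem_of_le hle (Multiset.mem_bind.2 ⟨e, he, hv⟩)
    simp only [Multiset.mem_bind, Multiset.mem_map] at hvU
    obtain ⟨_, ⟨r, -, rfl⟩, hvr⟩ := hvU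
    exact ⟨r, hvr⟩
  have : CanLift (Finset V) ι S (· ∈ Set.range S) := ⟨fun _ => id⟩
  exact CanLift.prf T mem_range

theorem eq_map_of_bind_val_le (hS : IsSelfSemiInducedMatching_s1 H S) {T : Multiset (Finset V)}
    (hT : ∀ e ∈ T, e ∈ H) {U : Multiset ι} (hcard : U.card ≤ T.card)
    (hle : T.bind Finset.val ≤ (U.map S).bind Finset.val) : T = U.map S := by
  obtain ⟨T, rfl⟩ := hS.exists_map_eq hT hle
  rw [Multiset.eq_of_le_of_card_le (le_of_bind_val_le hS.exists_private hle) (by simpa using hcard)]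

end IsSelfSemiInducedMatching_s1

end Matching

theorem stmt_1_general {V ι R : Type*} [CommSemiring R] [Nontrivial R] {H : Set (Finset V)}
    {S : ι → Finset V} (hS : IsSelfSemiInducedMatching_s1 H S) (U : Multiset ι) :
    (U.map fun r => ∏ v ∈ S r, (X v : MvPolynomial V R)).prod ∈ edgeIdeal R H ^ U.card ∧
    (U.map fun r => ∏ v ∈ S r, (X v : MvPolynomial V R)).prod ∉
      idealOfVars V R * edgeIdeal R H ^ U.card := by
  have prod_eq : (U.map fun r => ∏ v ∈ S r, (X v : MvPolynomial V R)).prod =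
      ((U.map S).map fun e => ∏ v ∈ e, X v).prod := by
    simp only [Multiset.map_map, Function.comp_apply]
  rw [prod_eq]
  constructor
  · rw [edgeIdeal, span_image_pow]
    exact Ideal.subset_span ⟨U.map S, ⟨by simp [hS.mem_edges], by simp⟩, rfl⟩
  · rw [prod_map_prod_X_eq_prod_bind, prod_map_X_mem_idealOfVars_mul_edgeIdeal_pow_iff]
    rintro ⟨w, T, hT, hcard, hle⟩
    obtain rfl := hS.eq_map_of_bind_val_le hT hcard.ge ((Multiset.le_cons_self _ w).trans hle)
    exact (Multiset.lt_cons_self _ w).not_ge hle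

/-- If `S = {S_1, …, S_i}` is a self semi-induced matching in a simple hypergraph `H`,
then for every `k ≥ 1` and all indices `u_1, …, u_k`, the monomial
`m(S_{u_1})⋯m(S_{u_k})` lies in `I(H)^k` but not in `𝔪·I(H)^k`, i.e. it is a
minimal monomial generator of `I(H)^k`. -/
theorem stmt_1 {V K : Type*} [Fintype V] [DecidableEq V] [Field K]
    (H : Finset (Finset V))
    (hedge : ∀ e ∈ H, 2 ≤ e.card)
    (hsimple : ∀ e ∈ H, ∀ e' ∈ H, e ⊆ e' → e = e')
    {i : ℕ} (S : Fin i → Finset V)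
    (hSinj : Function.Injective S)
    (hSH : ∀ r, S r ∈ H)
    (hself : ∀ r : Fin i, ¬ S r ⊆ (Finset.univ.erase r).sup S)
    (hsemi : ∀ e ∈ H, e ⊆ Finset.univ.sup S → ∃ r, e = S r)
    {k : ℕ} (hk : 1 ≤ k) (u : Fin k → Fin i) :
    (∏ j, ∏ v ∈ S (u j), (X v : MvPolynomial V K)) ∈
      (Ideal.span ((fun e : Finset V => ∏ v ∈ e, (X v : MvPolynomial V K)) '' ↑H)) ^ k ∧
    (∏ j, ∏ v ∈ S (u j), (X v : MvPolynomial V K)) ∉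
      Ideal.span (Set.range (X : V → MvPolynomial V K)) *
        (Ideal.span ((fun e : Finset V => ∏ v ∈ e, (X v : MvPolynomial V K)) '' ↑H)) ^ k := by
  have hS : IsSelfSemiInducedMatching_s1 (H : Set (Finset V)) S :=
    ⟨hSH, by simpa [Finset.not_subset, Finset.mem_sup, not_imp_not] using hself,
      by simpa [Finset.subset_iff, Finset.mem_sup, eq_comm] using hsemi⟩
  simpa [edgeIdeal, Multiset.map_map, List.prod_ofFn] using
    stmt_1_general (R := K) hS (Finset.univ.val.map u)
end

section
/- Let S = {S_1, …, S_i} be a self semi-induced matching in a simple hypergraph H and let t ≥ 1. Then the monomials m(S_1)^{a_1}⋯m(S_i)^{a_i}, as (a_1, …, a_i) ranges over the vectors of nonnegative integers with a_1 + … + a_i = t, are pairwise distinct and each lies in I(H)^t but not in 𝔪·I(H)^t, where 𝔪 = ⟨x_v : v ∈ V⟩. In particular, the set of monomials belonging to I(H)^t but not to 𝔪·I(H)^t has cardinality at least binomial(t + i − 1, i − 1), so I(H)^t has at least binomial(t + i − 1, i − 1) minimal monomial generators. -/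
open MvPolynomial

/-!
For a monomial ideal `I` generated by the exponent set `D`, the power `I ^ t` is generated by the
sumset `t • D`, and the monomials in `I ^ t` but not in `𝔪 * I ^ t` are those whose exponent is a
minimal element of `t • D`. Let `s r` be the exponents of the matching and `∑ a r = t`. An element
of `t • D` below `∑ a r • s r` is a sum of generators supported on the matching, hence is itself of
the form `∑ b r • s r` with `∑ b r = t`. Comparing the two at private variables gives `b ≤ a`, and
equality of the coordinate sums forces `b = a`.
-/

open scoped Pointwise

section Exponents

theorem mem_nsmul_range_iff {ι M : Type*} [Fintype ι] [AddCommMonoid M] {s : ι → M} {n : ℕ}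
    {d : M} : d ∈ n • Set.range s ↔ ∃ a : ι → ℕ, ∑ r, a r = n ∧ ∑ r, a r • s r = d := by
  classical
  constructor
  · rw [Set.mem_nsmul_iff_sum]
    rintro ⟨f, hf, rfl⟩
    choose g hg using hf
    refine ⟨fun r ↦ Finset.card {j | g j = r}, ?_, ?_⟩
    · simpa using (Finset.card_eq_sum_card_fiberwise (f := g) (s := .univ) (t := .univ)
        fun _ _ ↦ Finset.mem_coe.2 (Finset.mem_univ _)).symm
    · simp only [← hg, ← Finset.sum_const, ← Finset.sum_fiberwise' Finset.univ g s]
  · rintro ⟨a, rfl, rfl⟩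
    rw [← Finset.sum_nsmul_assoc]
    exact Set.finsetSum_mem_finsetSum _ _ _ fun r _ ↦ Set.nsmul_mem_nsmul (Set.mem_range_self r)

theorem mem_nsmul_sep_le {M : Type*} [AddCommMonoid M] [PartialOrder M] [IsOrderedAddMonoid M]
    [CanonicallyOrderedAdd M] {D : Set M} {n : ℕ} {c d : M} (hd : d ∈ n • D) (hdc : d ≤ c) :
    d ∈ n • {e ∈ D | e ≤ c} := by
  rw [Set.mem_nsmul_iff_sum] at hd ⊢
  obtain ⟨f, hf, rfl⟩ := hd
  exact ⟨f, fun j ↦ ⟨hf j, (Finset.single_le_sum_of_canonicallyOrdered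
    (Finset.mem_univ j)).trans hdc⟩, rfl⟩

theorem card_piAntidiag_univ_eq_multichoose {ι : Type*} [Fintype ι] [DecidableEq ι] (n : ℕ) :
    (Finset.piAntidiag (Finset.univ : Finset ι) n).card = (Fintype.card ι).multichoose n := by
  rw [← Finset.map_sym_eq_piAntidiag, Finset.card_map, Finset.sym_univ, Finset.card_univ,
    Sym.card_sym_eq_multichoose]

theorem choose_sub_one_eq_multichoose {n : ℕ} (hn : 1 ≤ n) (k : ℕ) :
    (k + n - 1).choose (n - 1) = n.multichoose k := by
  rw [Nat.multichoose_eq, add_comm k n]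
  exact Nat.choose_symm_of_eq_add (by omega)

theorem lt_iff_exists_single_add_le {σ : Type*} {c d : σ →₀ ℕ} :
    d < c ↔ ∃ v, Finsupp.single v 1 + d ≤ c := by
  classical
  constructor
  · intro h
    obtain ⟨e, rfl⟩ := le_iff_exists_add'.1 h.le
    have he : e ≠ 0 := by rintro rfl; simp at h
    obtain ⟨v, hv⟩ := Finsupp.ne_iff.1 he
    refine ⟨v, ?_⟩
    gcongr
    rw [Finsupp.single_le_iff]
    exact Nat.one_le_iff_ne_zero.2 hv
  · rintro ⟨v, hv⟩
    refine lt_of_lt_of_le ?_ hv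
    simp [pos_iff_ne_zero]

end Exponents

section MonomialIdeals

variable {σ R : Type*} [CommSemiring R] {D : Set (σ →₀ ℕ)} {c : σ →₀ ℕ}

variable (R) in
/-- The ideal generated by the monomials with exponents in `D`. -/
noncomputable def monomialIdeal (D : Set (σ →₀ ℕ)) : Ideal (MvPolynomial σ R) :=
  Ideal.span ((monomial · 1) '' D)

/-- The monomials, with coefficient `1`, that lie in `I` but not in `𝔪 * I`. For a monomial ideal
these are its minimal monomial generators. -/
def minimalMonomials (I : Ideal (MvPolynomial σ R)) : Set (MvPolynomial σ R) :=
  {p | (∃ d : σ →₀ ℕ, p = monomial d 1) ∧ p ∈ I ∧ p ∉ idealOfVars σ R * I}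

theorem idealOfVars_eq_monomialIdeal :
    idealOfVars σ R = monomialIdeal R (Set.range fun v ↦ Finsupp.single v 1) := by
  rw [idealOfVars, monomialIdeal, ← Set.range_comp]
  rfl

theorem monomialIdeal_mul (D E : Set (σ →₀ ℕ)) :
    monomialIdeal R D * monomialIdeal R E = monomialIdeal R (D + E) := by
  rw [monomialIdeal, monomialIdeal, Ideal.span_mul_span', monomialIdeal, ← Set.image2_mul,
    ← Set.image2_add, Set.image2_image_left, Set.image2_image_right, Set.image_image2]
  simp only [monomial_mul, one_mul]

theorem monomialIdeal_pow (D : Set (σ →₀ ℕ)) (n : ℕ) :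
    monomialIdeal R D ^ n = monomialIdeal R (n • D) := by
  induction n with
  | zero => simp [monomialIdeal, Ideal.one_eq_top, ← Set.singleton_zero]
  | succ n ih => rw [pow_succ, ih, monomialIdeal_mul, succ_nsmul]

variable [Nontrivial R]

theorem monomial_mem_monomialIdeal_iff :
    monomial c (1 : R) ∈ monomialIdeal R D ↔ ∃ d ∈ D, d ≤ c := by
  classical
  simp [monomialIdeal, mem_ideal_span_monomial_image, coeff_monomial]

theorem monomial_mem_idealOfVars_mul_iff :
    monomial c (1 : R) ∈ idealOfVars σ R * monomialIdeal R D ↔ ∃ d ∈ D, d < c := by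
  simp only [idealOfVars_eq_monomialIdeal, monomialIdeal_mul, monomial_mem_monomialIdeal_iff,
    Set.mem_add, Set.exists_range_iff, lt_iff_exists_single_add_le]
  grind

theorem monomial_mem_minimalMonomials_iff :
    monomial c (1 : R) ∈ minimalMonomials (monomialIdeal R D) ↔ Minimal (· ∈ D) c := by
  constructor
  · rintro ⟨-, hmem, hnot⟩
    rw [monomial_mem_monomialIdeal_iff] at hmem
    rw [monomial_mem_idealOfVars_mul_iff] at hnot
    obtain ⟨d, hd, hdc⟩ := hmem
    obtain rfl : d = c := hdc.eq_of_not_lt fun hlt ↦ hnot ⟨d, hd, hlt⟩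
    exact minimal_iff_forall_lt.2 ⟨hd, fun e hlt he ↦ hnot ⟨e, he, hlt⟩⟩
  · intro hc
    refine ⟨⟨c, rfl⟩, monomial_mem_monomialIdeal_iff.2 ⟨c, hc.prop, le_rfl⟩, ?_⟩
    rw [monomial_mem_idealOfVars_mul_iff]
    rintro ⟨d, hd, hlt⟩
    exact hc.not_prop_of_lt hlt hd

end MonomialIdeals

section Matchings

variable {σ ι : Type*} {D : Set (σ →₀ ℕ)} {s : ι → σ →₀ ℕ}

/-- Each monomial of the family with exponents `s` involves a variable that occurs in no other
member: for supports of monomials this is condition (a) of a self semi-induced matching. -/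
def HasPrivateVariables (s : ι → σ →₀ ℕ) : Prop :=
  ∀ r, ∃ v, ∀ r', s r' v ≠ 0 ↔ r' = r

/-- A self semi-induced matching, for the exponents `D` of the generators of an arbitrary monomial
ideal in place of the edges of a simple hypergraph: supports play the role of edges. -/
structure IsSelfSemiInducedMatching_s10 (D : Set (σ →₀ ℕ)) (s : ι → σ →₀ ℕ) : Prop where
  mem : ∀ r, s r ∈ D
  hasPrivateVariables : HasPrivateVariables s
  mem_range : ∀ d ∈ D, (∀ v, d v ≠ 0 → ∃ r, s r v ≠ 0) → d ∈ Set.range s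

variable [Fintype ι]

theorem HasPrivateVariables.sum_nsmul_le_sum_nsmul_iff (hs : HasPrivateVariables s)
    {a b : ι → ℕ} : ∑ r, a r • s r ≤ ∑ r, b r • s r ↔ a ≤ b := by
  refine ⟨fun h r ↦ ?_, fun h ↦ Finset.sum_le_sum fun r _ ↦ nsmul_le_nsmul_left zero_le (h r)⟩
  obtain ⟨v, hv⟩ := hs r
  have eval_private (c : ι → ℕ) : (∑ r', c r' • s r') v = c r * s r v := by
    rw [Finsupp.finsetSum_apply]
    refine Finset.sum_eq_single r (fun r' _ hr' ↦ ?_) (by simp)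
    simp [not_imp_comm.1 (hv r').1 hr']
  have h_private : a r * s r v ≤ b r * s r v := by simpa only [eval_private] using h v
  exact Nat.le_of_mul_le_mul_right h_private (Nat.pos_of_ne_zero ((hv r).2 rfl))

theorem HasPrivateVariables.sum_nsmul_injective (hs : HasPrivateVariables s) :
    Function.Injective fun a : ι → ℕ ↦ ∑ r, a r • s r := fun _ _ hab ↦
  le_antisymm (hs.sum_nsmul_le_sum_nsmul_iff.1 hab.le) (hs.sum_nsmul_le_sum_nsmul_iff.1 hab.ge)

namespace IsSelfSemiInducedMatching_s10

theorem mem_range_of_le_sum_nsmul (h : IsSelfSemiInducedMatching_s10 D s) {a : ι → ℕ} {d : σ →₀ ℕ}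
    (hd : d ∈ D) (hda : d ≤ ∑ r, a r • s r) : d ∈ Set.range s := by
  refine h.mem_range d hd fun v hv ↦ ?_
  by_contra! hsv
  have hdv : d v ≤ 0 := by simpa [Finsupp.finsetSum_apply, hsv] using hda v
  exact hv (Nat.le_zero.1 hdv)

theorem minimal_sum_nsmul (h : IsSelfSemiInducedMatching_s10 D s) (a : ι → ℕ) :
    Minimal (· ∈ (∑ r, a r) • D) (∑ r, a r • s r) := by
  have range_subset : Set.range s ⊆ D := Set.range_subset_iff.2 h.mem
  refine ⟨Set.nsmul_subset_nsmul_left range_subset (mem_nsmul_range_iff.2 ⟨a, rfl, rfl⟩),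
    fun d hd hda ↦ ?_⟩
  have hd_range : d ∈ (∑ r, a r) • Set.range s :=
    Set.nsmul_subset_nsmul_left (fun _ he ↦ h.mem_range_of_le_sum_nsmul he.1 he.2)
      (mem_nsmul_sep_le hd hda)
  obtain ⟨b, hsum, rfl⟩ := mem_nsmul_range_iff.1 hd_range
  have hba : b ≤ a := h.hasPrivateVariables.sum_nsmul_le_sum_nsmul_iff.1 hda
  have hb_eq : b = a := funext fun r ↦
    (Finset.sum_eq_sum_iff_of_le fun r _ ↦ hba r).1 hsum r (Finset.mem_univ r)
  rw [hb_eq]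

end IsSelfSemiInducedMatching_s10

variable (R : Type*) [CommSemiring R]

theorem prod_monomial_pow (s : ι → σ →₀ ℕ) (a : ι → ℕ) :
    ∏ r, monomial (s r) (1 : R) ^ a r = monomial (∑ r, a r • s r) 1 := by
  simp only [monomial_sum_one, monomial_pow, one_pow]

theorem stmt_10_general [Nontrivial R] (h : IsSelfSemiInducedMatching_s10 D s) (t : ℕ) :
    (Function.Injective fun a : ι → ℕ ↦ ∏ r, monomial (s r) (1 : R) ^ a r) ∧
    (∀ a : ι → ℕ, ∑ r, a r = t →
      ∏ r, monomial (s r) (1 : R) ^ a r ∈ minimalMonomials (monomialIdeal R D ^ t)) ∧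
    ∃ G : Finset (MvPolynomial σ R), ↑G ⊆ minimalMonomials (monomialIdeal R D ^ t) ∧
      (Fintype.card ι).multichoose t ≤ G.card := by
  classical
  have injective : Function.Injective fun a : ι → ℕ ↦ ∏ r, monomial (s r) (1 : R) ^ a r := by
    simp only [prod_monomial_pow]
    exact (monomial_left_injective one_ne_zero).comp h.hasPrivateVariables.sum_nsmul_injective
  have mem_minimalMonomials (a : ι → ℕ) (ha : ∑ r, a r = t) :
      ∏ r, monomial (s r) (1 : R) ^ a r ∈ minimalMonomials (monomialIdeal R D ^ t) := by
    rw [prod_monomial_pow, monomialIdeal_pow, monomial_mem_minimalMonomials_iff, ← ha]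
    exact h.minimal_sum_nsmul a
  refine ⟨injective, mem_minimalMonomials, (Finset.piAntidiag Finset.univ t).image _, ?_,
    (Finset.card_image_of_injective _ injective).trans
      (card_piAntidiag_univ_eq_multichoose t) |>.ge⟩
  rw [Finset.coe_image, Set.image_subset_iff]
  exact fun a ha ↦ mem_minimalMonomials a (by simpa using ha)

end Matchings

section Hypergraphs

variable {V ι : Type*}

/-- The exponent vector of the squarefree monomial `m(e)`: the indicator function of `e`. -/
noncomputable def edgeExponent (e : Finset V) : V →₀ ℕ :=
  Finsupp.indicator e fun _ _ ↦ 1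

theorem edgeExponent_ne_zero_iff {e : Finset V} {v : V} : edgeExponent e v ≠ 0 ↔ v ∈ e := by
  classical
  simp [edgeExponent, Finsupp.indicator_apply]

theorem prod_X_eq_monomial_edgeExponent {R : Type*} [CommSemiring R] (e : Finset V) :
    ∏ v ∈ e, (X v : MvPolynomial V R) = monomial (edgeExponent e) 1 := by
  simpa only [pow_one, edgeExponent] using prod_X_pow (R := R) (fun _ ↦ 1) e

theorem isSelfSemiInducedMatching_edgeExponent [Fintype ι] [DecidableEq ι] [DecidableEq V]
    {H : Set (Finset V)} {S : ι → Finset V} (hSH : ∀ r, S r ∈ H)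
    (hself : ∀ r, ¬ S r ⊆ (Finset.univ.erase r).sup S)
    (hsemi : ∀ e ∈ H, e ⊆ Finset.univ.sup S → ∃ r, e = S r) :
    IsSelfSemiInducedMatching_s10 (edgeExponent '' H) fun r ↦ edgeExponent (S r) where
  mem r := Set.mem_image_of_mem _ (hSH r)
  hasPrivateVariables r := by
    obtain ⟨v, hv, hv_notMem⟩ := Finset.not_subset.1 (hself r)
    simp only [Finset.mem_sup, Finset.mem_erase, Finset.mem_univ, and_true, not_exists,
      not_and] at hv_notMem
    refine ⟨v, fun r' ↦ edgeExponent_ne_zero_iff.trans ⟨fun hv' ↦ ?_, fun hr ↦ hr ▸ hv⟩⟩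
    exact by_contra fun hr ↦ hv_notMem r' hr hv'
  mem_range := by
    rintro _ ⟨e, he, rfl⟩ hsupp
    have he_sub : e ⊆ Finset.univ.sup S := fun v hv ↦ by
      simpa [Finset.mem_sup, edgeExponent_ne_zero_iff] using
        hsupp v (edgeExponent_ne_zero_iff.2 hv)
    obtain ⟨r, rfl⟩ := hsemi e he he_sub
    exact Set.mem_range_self r

end Hypergraphs

/-- If `S = {S_1, …, S_i}` is a self semi-induced matching in a simple hypergraph `H`
and `t ≥ 1`, then the monomials `m(S_1)^{a_1}⋯m(S_i)^{a_i}`, for `a_1 + … + a_i = t`,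
are pairwise distinct and each lies in `I(H)^t` but not in `𝔪·I(H)^t`; in particular
the set of monomials belonging to `I(H)^t` but not to `𝔪·I(H)^t` (the minimal monomial
generators of `I(H)^t`) has at least `(t + i − 1).choose (i − 1)` elements. -/
theorem stmt_10 {V K : Type*} [Fintype V] [DecidableEq V] [Field K]
    (H : Finset (Finset V))
    (hedge : ∀ e ∈ H, 2 ≤ e.card)
    (hsimple : ∀ e ∈ H, ∀ e' ∈ H, e ⊆ e' → e = e')
    {i : ℕ} (hi : 1 ≤ i) (S : Fin i → Finset V)
    (hSinj : Function.Injective S)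
    (hSH : ∀ r, S r ∈ H)
    (hself : ∀ r : Fin i, ¬ S r ⊆ (Finset.univ.erase r).sup S)
    (hsemi : ∀ e ∈ H, e ⊆ Finset.univ.sup S → ∃ r, e = S r)
    (t : ℕ) (ht : 1 ≤ t) :
    (∀ a b : Fin i → ℕ, (∑ r, a r) = t → (∑ r, b r) = t →
      (∏ r, (∏ v ∈ S r, (X v : MvPolynomial V K)) ^ a r) =
        (∏ r, (∏ v ∈ S r, (X v : MvPolynomial V K)) ^ b r) → a = b) ∧
    (∀ a : Fin i → ℕ, (∑ r, a r) = t →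
      (∏ r, (∏ v ∈ S r, (X v : MvPolynomial V K)) ^ a r) ∈
        (Ideal.span ((fun e : Finset V => ∏ v ∈ e, (X v : MvPolynomial V K)) '' ↑H)) ^ t ∧
      (∏ r, (∏ v ∈ S r, (X v : MvPolynomial V K)) ^ a r) ∉
        Ideal.span (Set.range (X : V → MvPolynomial V K)) *
          (Ideal.span ((fun e : Finset V => ∏ v ∈ e, (X v : MvPolynomial V K)) '' ↑H)) ^ t) ∧
    (∃ G : Finset (MvPolynomial V K),
      (↑G ⊆ {p : MvPolynomial V K | (∃ s : V →₀ ℕ, p = MvPolynomial.monomial s (1 : K)) ∧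
        p ∈ (Ideal.span
          ((fun e : Finset V => ∏ v ∈ e, (X v : MvPolynomial V K)) '' ↑H)) ^ t ∧
        p ∉ Ideal.span (Set.range (X : V → MvPolynomial V K)) *
          (Ideal.span
            ((fun e : Finset V => ∏ v ∈ e, (X v : MvPolynomial V K)) '' ↑H)) ^ t}) ∧
      (t + i - 1).choose (i - 1) ≤ G.card) := by
  obtain ⟨injective, mem_minimal, hG⟩ :=
    stmt_10_general K (isSelfSemiInducedMatching_edgeExponent hSH hself hsemi) t
  simp only [monomialIdeal, Set.image_image, Fintype.card_fin] at mem_minimal hG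
  simp only [prod_X_eq_monomial_edgeExponent, choose_sub_one_eq_multichoose hi]
  exact ⟨fun _ _ _ _ hab ↦ injective hab, fun a ha ↦ (mem_minimal a ha).2, hG⟩
end
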